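/- Write R^{∨,(q,s)}(u) for the C-conjugated R-matrix with parameter pair (q, s) (where s² = −q), and for X ∈ End(ℂ^N⊗ℂ^N) let (w⊗w)(X) = (J⊗J) X^T (J⊗J) with J = Σ_i E_{i,N−i+1}. Then for every u ∈ ℂ^× for which both sides are defined, one has (w⊗w)( P R^{∨,(q^{-1},s^{-1})}(u^{-1}) P ) = R^{∨,(q,s)}(u). -/

import Mathlib

/-! The identity holds entry by entry. Write `x = s^{2N} u⁻¹`. Both `C` and `C⁻¹` are antidiagonal, so
the `((p₁,p₂),(r₁,r₂))` entry of `R^∨(u)` is the entry of `R(x)` at `((r₁, p̄₂), (p₁, r̄₂))` times a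
power of `-q` (`Rvee_apply`). Replacing `(q, x)` by `(q⁻¹, x⁻¹)` in `R` amounts to conjugating by `P`
(`RBJ_inv_apply`), and conjugation by `P` and `w ⊗ w` only permute indices, so the left-hand side has
exactly the same entry of `R(x)` in that position, times another power of `-q`. The two powers agree
wherever the entry is nonzero, because `R` preserves weights: its `((a,b),(c,d))` entry vanishes
unless `a + b = c + d` (`RBJ_apply_eq_zero`). -/

open Matrix
open scoped Kronecker

noncomputable section

/-- 1-based matrix unit `E_{a b}` in the `N × N` complex matrices. -/
def Em (N : ℕ) (a b : ℕ) : Matrix (Fin N) (Fin N) ℂ :=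
  Matrix.of fun i j => if (i : ℕ) + 1 = a ∧ (j : ℕ) + 1 = b then 1 else 0

/-- The flip (permutation) operator `P = Σ_{i,j} E_{ij} ⊗ E_{ji}`. -/
def Pmat (N : ℕ) : Matrix (Fin N × Fin N) (Fin N × Fin N) ℂ :=
  ∑ i ∈ Finset.Icc 1 N, ∑ j ∈ Finset.Icc 1 N, Em N i j ⊗ₖ Em N j i

/-- The constant R-matrix `R_q`. -/
def Rconst (N : ℕ) (q : ℂ) : Matrix (Fin N × Fin N) (Fin N × Fin N) ℂ :=
  (∑ i ∈ Finset.Icc 1 N, ∑ j ∈ Finset.Icc 1 N,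
      (if i = j then q else 1) • (Em N i i ⊗ₖ Em N j j))
    + ∑ i ∈ Finset.Icc 1 N, ∑ j ∈ Finset.Icc 1 N,
        (if i < j then q - q⁻¹ else 0) • (Em N i j ⊗ₖ Em N j i)

/-- `f_q(u) = 1/(q - q⁻¹ u)`. -/
def fBJ (q u : ℂ) : ℂ := (q - q⁻¹ * u)⁻¹

/-- The Bazhanov–Jimbo R-matrix `R(u) = f_q(u) R_q + f_{q⁻¹}(u⁻¹) P R_{q⁻¹} P`. -/
def RBJ (N : ℕ) (q u : ℂ) : Matrix (Fin N × Fin N) (Fin N × Fin N) ℂ :=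
  fBJ q u • Rconst N q + fBJ q⁻¹ u⁻¹ • (Pmat N * Rconst N q⁻¹ * Pmat N)

/-- `X1 = X ⊗ I`. -/
def M1 (N : ℕ) (X : Matrix (Fin N) (Fin N) ℂ) : Matrix (Fin N × Fin N) (Fin N × Fin N) ℂ :=
  X ⊗ₖ (1 : Matrix (Fin N) (Fin N) ℂ)

/-- `X2 = I ⊗ X`. -/
def M2 (N : ℕ) (X : Matrix (Fin N) (Fin N) ℂ) : Matrix (Fin N × Fin N) (Fin N × Fin N) ℂ :=
  (1 : Matrix (Fin N) (Fin N) ℂ) ⊗ₖ X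

/-- `R21(u) = P R(u) P`. -/
def R21 (N : ℕ) (q u : ℂ) : Matrix (Fin N × Fin N) (Fin N × Fin N) ℂ :=
  Pmat N * RBJ N q u * Pmat N

/-- Transposition in the first tensor factor. -/
def t1 (N : ℕ) (X : Matrix (Fin N × Fin N) (Fin N × Fin N) ℂ) :
    Matrix (Fin N × Fin N) (Fin N × Fin N) ℂ :=
  Matrix.of fun p r => X (r.1, p.2) (p.1, r.2)

/-- The charge conjugation matrix `C = Σ_i (-q)^i E_{ī i}` where `ī = N+1-i`. -/
def Cmat (N : ℕ) (q : ℂ) : Matrix (Fin N) (Fin N) ℂ :=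
  ∑ i ∈ Finset.Icc 1 N, (-q) ^ i • Em N (N + 1 - i) i

/-- The C-conjugated R-matrix `R^∨(u) = C2⁻¹ R^{t1}(q̃² u⁻¹) C2` with `q̃ = s^N`. -/
def Rvee (N : ℕ) (q s u : ℂ) : Matrix (Fin N × Fin N) (Fin N × Fin N) ℂ :=
  (M2 N (Cmat N q))⁻¹ * t1 N (RBJ N q ((s ^ N) ^ 2 * u⁻¹)) * M2 N (Cmat N q)

/-- `R^∨21(u) = P R^∨(u) P`. -/
def Rvee21 (N : ℕ) (q s u : ℂ) : Matrix (Fin N × Fin N) (Fin N × Fin N) ℂ :=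
  Pmat N * Rvee N q s u * Pmat N

/-- The untwisted reflection equation at spectral parameters `(u, v)`. -/
def REeq (N : ℕ) (q : ℂ) (K : ℂ → Matrix (Fin N) (Fin N) ℂ) (u v : ℂ) : Prop :=
  R21 N q (u / v) * M1 N (K u) * RBJ N q (u * v) * M2 N (K v)
    = M2 N (K v) * R21 N q (u * v) * M1 N (K u) * RBJ N q (u / v)

/-- `K` satisfies the untwisted reflection equation (RE) for all `u, v`
for which all factors are defined. -/
def IsRESol (N : ℕ) (q : ℂ) (K : ℂ → Matrix (Fin N) (Fin N) ℂ) : Prop :=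
  ∀ u v : ℂ, u ≠ 0 → v ≠ 0 → u / v ≠ q ^ 2 → u / v ≠ q⁻¹ ^ 2 →
    u * v ≠ q ^ 2 → u * v ≠ q⁻¹ ^ 2 → REeq N q K u v

/-- The cross-conjugated twisted reflection equation at `(u, v)`. -/
def CtREeq (N : ℕ) (q s : ℂ) (K : ℂ → Matrix (Fin N) (Fin N) ℂ) (u v : ℂ) : Prop :=
  R21 N q (u / v) * M1 N (K u) * Rvee N q s (u * v) * M2 N (K v)
    = M2 N (K v) * Rvee21 N q s (u * v) * M1 N (K u) * RBJ N q (u / v)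

/-- `K` satisfies the cross-conjugated twisted reflection equation (CtRE) for all
`u, v` for which all factors are defined. -/
def IsCtRESol (N : ℕ) (q s : ℂ) (K : ℂ → Matrix (Fin N) (Fin N) ℂ) : Prop :=
  ∀ u v : ℂ, u ≠ 0 → v ≠ 0 → u / v ≠ q ^ 2 → u / v ≠ q⁻¹ ^ 2 →
    (s ^ N) ^ 2 * (u * v)⁻¹ ≠ q ^ 2 → (s ^ N) ^ 2 * (u * v)⁻¹ ≠ q⁻¹ ^ 2 →
    CtREeq N q s K u v

/-- Transposition across the antidiagonal: `(M^w)_{ij} = M_{N+1-j, N+1-i}`. -/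
def wT (N : ℕ) (M : Matrix (Fin N) (Fin N) ℂ) : Matrix (Fin N) (Fin N) ℂ :=
  Matrix.of fun i j => M (Fin.rev j) (Fin.rev i)

/-- The antidiagonal permutation matrix `J = Σ_i E_{i, N+1-i}`. -/
def Jw (N : ℕ) : Matrix (Fin N) (Fin N) ℂ :=
  ∑ i ∈ Finset.Icc 1 N, Em N i (N + 1 - i)

/-- `(w ⊗ w)(X) = (J ⊗ J) Xᵀ (J ⊗ J)`: the antidiagonal transposition applied in
both tensor factors. -/
def ww (N : ℕ) (X : Matrix (Fin N × Fin N) (Fin N × Fin N) ℂ) :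
    Matrix (Fin N × Fin N) (Fin N × Fin N) ℂ :=
  (Jw N ⊗ₖ Jw N) * Xᵀ * (Jw N ⊗ₖ Jw N)

lemma sum_Icc_one_eq_sum_fin {M : Type*} [AddCommMonoid M] (N : ℕ) (f : ℕ → M) :
    ∑ i ∈ Finset.Icc 1 N, f i = ∑ i : Fin N, f (i + 1) := by
  rw [Fin.sum_univ_eq_sum_range (fun i => f (i + 1)) N, Finset.range_eq_Ico,
    Finset.sum_Ico_add' f 0 N 1]
  rfl

lemma Em_succ_apply (N : ℕ) (a b i j : Fin N) :
    Em N (a + 1) (b + 1) i j = if i = a ∧ j = b then 1 else 0 := by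
  simp [Em, Fin.ext_iff]

lemma fin_succ_rev (N : ℕ) (i : Fin N) : N + 1 - ((i : ℕ) + 1) = (i.rev : ℕ) + 1 := by
  rw [Fin.val_rev]; omega

lemma Pmat_apply (N : ℕ) (p r : Fin N × Fin N) :
    Pmat N p r = if r = p.swap then 1 else 0 := by
  obtain ⟨a, b⟩ := p
  obtain ⟨c, d⟩ := r
  simp only [Pmat, sum_Icc_one_eq_sum_fin, Matrix.sum_apply, kroneckerMap_apply, Em_succ_apply,
    Prod.swap_prod_mk, Prod.mk.injEq]
  rw [Finset.sum_eq_single a (by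
      intro x _ hx; simp [hx.symm]) (by simp),
    Finset.sum_eq_single b (by intro x _ hx; simp [hx.symm]) (by simp)]
  by_cases h1 : c = b <;> by_cases h2 : d = a <;> simp [h1, h2]

lemma Pmat_conj_apply (N : ℕ) (X : Matrix (Fin N × Fin N) (Fin N × Fin N) ℂ)
    (p r : Fin N × Fin N) : (Pmat N * X * Pmat N) p r = X p.swap r.swap := by
  have h (k : Fin N × Fin N) : r = k.swap ↔ k = r.swap := by
    constructor <;> rintro rfl <;> simp
  simp [Matrix.mul_apply, Pmat_apply, h]

lemma Jw_apply (N : ℕ) (i j : Fin N) : Jw N i j = if j = i.rev then 1 else 0 := by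
  simp only [Jw, sum_Icc_one_eq_sum_fin, Matrix.sum_apply, fin_succ_rev, Em_succ_apply]
  rw [Finset.sum_eq_single i (by intro x _ hx; simp [hx.symm]) (by simp)]
  simp

lemma ww_apply (N : ℕ) (X : Matrix (Fin N × Fin N) (Fin N × Fin N) ℂ) (p r : Fin N × Fin N) :
    ww N X p r = X (r.1.rev, r.2.rev) (p.1.rev, p.2.rev) := by
  have h (a b : Fin N) : a = b.rev ↔ b = a.rev := by
    constructor <;> rintro rfl <;> simp
  have hJ (p r : Fin N × Fin N) :
      (Jw N ⊗ₖ Jw N) p r = if r = (p.1.rev, p.2.rev) then 1 else 0 := by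
    simp [kroneckerMap_apply, Jw_apply, Prod.ext_iff, ← ite_and, and_comm]
  have hr (k : Fin N × Fin N) : r = (k.1.rev, k.2.rev) ↔ k = (r.1.rev, r.2.rev) := by
    simp only [Prod.ext_iff, h]
  simp only [ww, Matrix.mul_apply, hJ, hr, Matrix.transpose_apply]
  simp

lemma Cmat_apply (N : ℕ) (q : ℂ) (i j : Fin N) :
    Cmat N q i j = if i = j.rev then (-q) ^ ((j : ℕ) + 1) else 0 := by
  simp only [Cmat, sum_Icc_one_eq_sum_fin, Matrix.sum_apply, fin_succ_rev, Matrix.smul_apply,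
    Em_succ_apply]
  rw [Finset.sum_eq_single j (by intro x _ hx; simp [hx.symm]) (by simp)]
  simp

/-- The inverse of the charge conjugation matrix `C`, again antidiagonal. -/
def CmatInv (N : ℕ) (q : ℂ) : Matrix (Fin N) (Fin N) ℂ :=
  Matrix.of fun i j => if j = i.rev then ((-q) ^ ((i : ℕ) + 1))⁻¹ else 0

lemma M2_Cmat_inv (N : ℕ) {q : ℂ} (hq : q ≠ 0) :
    (M2 N (Cmat N q))⁻¹ = M2 N (CmatInv N q) := by
  apply Matrix.inv_eq_left_inv
  have h : CmatInv N q * Cmat N q = 1 := by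
    ext i j
    have hq' : (-q) ^ ((i : ℕ) + 1) ≠ 0 := pow_ne_zero _ (neg_ne_zero.mpr hq)
    by_cases hij : i = j
    · subst hij
      simp only [Matrix.mul_apply, CmatInv, Cmat_apply, Matrix.of_apply, ite_mul, zero_mul,
        Finset.sum_ite_eq', Finset.mem_univ, if_true, Matrix.one_apply_eq]
      exact inv_mul_cancel₀ hq'
    · simp [Matrix.mul_apply, CmatInv, Cmat_apply, hij, Ne.symm hij]
  simp [M2, ← Matrix.mul_kronecker_mul, h]

lemma Rvee_apply (N : ℕ) {q : ℂ} (hq : q ≠ 0) (s u : ℂ) (p r : Fin N × Fin N) :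
    Rvee N q s u p r = ((-q) ^ ((p.2 : ℕ) + 1))⁻¹
      * RBJ N q ((s ^ N) ^ 2 * u⁻¹) (r.1, p.2.rev) (p.1, r.2.rev) * (-q) ^ ((r.2 : ℕ) + 1) := by
  rw [Rvee, M2_Cmat_inv N hq]
  simp only [Matrix.mul_apply, M2, kroneckerMap_apply, Fintype.sum_prod_type, CmatInv, Cmat_apply,
    Matrix.one_apply, Matrix.of_apply, t1]
  simp

/-- Inverting both `q` and the spectral parameter conjugates `R` by the flip. -/
lemma RBJ_inv_apply (N : ℕ) (q x : ℂ) (p r : Fin N × Fin N) :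
    RBJ N q⁻¹ x⁻¹ p r = RBJ N q x p.swap r.swap := by
  simp only [RBJ, inv_inv, Matrix.add_apply, Matrix.smul_apply, Pmat_conj_apply, Prod.swap_swap]
  rw [add_comm]

lemma Rconst_apply_eq_zero (N : ℕ) (q : ℂ) (p r : Fin N × Fin N)
    (h : (p.1 : ℕ) + p.2 ≠ r.1 + r.2) : Rconst N q p r = 0 := by
  have key (a b c d : Fin N) (hw : a.val + c = b + d) :
      (Em N (a + 1) (b + 1) ⊗ₖ Em N (c + 1) (d + 1)) p r = 0 := by
    simp only [kroneckerMap_apply, Em_succ_apply, mul_ite, mul_one, mul_zero]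
    rw [← ite_and, if_neg]
    rintro ⟨⟨h1, h2⟩, h3, h4⟩
    subst_vars
    exact h hw
  simp only [Rconst, sum_Icc_one_eq_sum_fin, Matrix.add_apply, Matrix.sum_apply,
    Matrix.smul_apply]
  have h1 (i j : Fin N) := key i i j j rfl
  have h2 (i j : Fin N) := key i j j i (add_comm _ _)
  simp only [h1, h2, smul_zero, Finset.sum_const_zero, add_zero]

/-- Weight conservation: `R(x)` maps `e_c ⊗ e_d` to combinations of `e_a ⊗ e_b` with
`a + b = c + d`. -/
lemma RBJ_apply_eq_zero (N : ℕ) (q x : ℂ) (p r : Fin N × Fin N)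
    (h : (p.1 : ℕ) + p.2 ≠ r.1 + r.2) : RBJ N q x p r = 0 := by
  have h' : (p.swap.1 : ℕ) + p.swap.2 ≠ r.swap.1 + r.swap.2 := by
    simp only [Prod.fst_swap, Prod.snd_swap]; omega
  simp [RBJ, Pmat_conj_apply, Rconst_apply_eq_zero N _ p r h, Rconst_apply_eq_zero N _ _ _ h']

/-- `(w⊗w)( P R^{∨,(q⁻¹,s⁻¹)}(u⁻¹) P ) = R^{∨,(q,s)}(u)` for all `u`
for which both sides are defined. -/
theorem statement10 (N : ℕ) (hN : 2 ≤ N) (q s : ℂ) (hq : q ≠ 0) (hs : s ^ 2 = -q)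
    (u : ℂ) (hu0 : u ≠ 0)
    (hu1 : (s ^ N) ^ 2 * u⁻¹ ≠ q ^ 2) (hu2 : (s ^ N) ^ 2 * u⁻¹ ≠ q⁻¹ ^ 2) :
    ww N (Pmat N * Rvee N q⁻¹ s⁻¹ u⁻¹ * Pmat N) = Rvee N q s u := by
  ext ⟨p₁, p₂⟩ ⟨r₁, r₂⟩
  have hx : (s⁻¹ ^ N) ^ 2 * u⁻¹⁻¹ = ((s ^ N) ^ 2 * u⁻¹)⁻¹ := by
    simp [_root_.mul_inv_rev, mul_comm]
  rw [ww_apply, Pmat_conj_apply, Rvee_apply N (inv_ne_zero hq), Rvee_apply N hq, hx, RBJ_inv_apply]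
  simp only [Prod.swap_prod_mk, Fin.rev_rev]
  by_cases hw : (r₁ : ℕ) + (p₂.rev : ℕ) = p₁ + (r₂.rev : ℕ)
  · have hq' : -q ≠ 0 := neg_ne_zero.mpr hq
    have hexp : ((r₁.rev : ℕ) + 1) + ((p₂ : ℕ) + 1) = ((r₂ : ℕ) + 1) + ((p₁.rev : ℕ) + 1) := by
      simp only [Fin.val_rev] at hw ⊢
      omega
    have hpow := congrArg (fun n => (-q) ^ n) hexp
    simp only [pow_add _ ((r₁.rev : ℕ) + 1), pow_add _ ((r₂ : ℕ) + 1)] at hpow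
    have hA := pow_ne_zero ((p₂ : ℕ) + 1) hq'
    have hB := pow_ne_zero ((p₁.rev : ℕ) + 1) hq'
    simp only [← inv_neg, inv_pow, inv_inv]
    generalize (-q) ^ ((r₁.rev : ℕ) + 1) = a at *
    generalize (-q) ^ ((p₂ : ℕ) + 1) = b at *
    generalize (-q) ^ ((r₂ : ℕ) + 1) = c at *
    generalize (-q) ^ ((p₁.rev : ℕ) + 1) = d at *
    generalize RBJ N q ((s ^ N) ^ 2 * u⁻¹) _ _ = e
    field_simp
    linear_combination e * hpow
  · rw [RBJ_apply_eq_zero N q _ (r₁, p₂.rev) (p₁, r₂.rev) hw]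
    simp

end
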